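/- Let K be a finite field with q elements, q ≥ 3, and let T be the projective torus in ℙ^2 over K. Then for d ≥ 1 the minimum distance of C_T(d) is: δ_d = (q−1)^2 − d(q−1) if 1 ≤ d ≤ q−2; δ_d = 2q − d − 3 if q−1 ≤ d ≤ 2q−5; and δ_d = 1 if d ≥ 2q−4. -/

import Mathlib

open MvPolynomial

/-- The projective torus in `ℙ^(s-1)` over `K`: the classes of points all of whose
coordinates are nonzero (a condition invariant under scaling, tested on the chosen
representative). -/
noncomputable def projTorus (K : Type) [Field K] (s : ℕ) :
    Set (Projectivization K (Fin s → K)) :=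
  {p | ∀ i, p.rep i ≠ 0}

/-- The Hilbert function of a set `Y` of points of projective space (equivalently the
dimension of the parameterized code of order `d` on `Y`): the `K`-dimension of the
space of functions on `Y` of the form `[P] ↦ F(P)/P_{i0}^d` with `F` homogeneous of
degree `d`. -/
noncomputable def hilbFn (K : Type) [Field K] {ι : Type}
    (Y : Set (Projectivization K (ι → K))) (i0 : ι) (d : ℕ) : ℕ :=
  Module.finrank K ↥(Submodule.span K
    {f : ↥Y → K | ∃ F : MvPolynomial ι K, F.IsHomogeneous d ∧
      ∀ p : ↥Y, f p = eval p.1.rep F / (p.1.rep i0) ^ d})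

/-- The minimum distance of the parameterized (evaluation) code of order `d` on a set
`Y` of points of projective space: the least number of points of `Y` at which a
homogeneous polynomial of degree `d` not vanishing identically on `Y` is nonzero. -/
noncomputable def minDist (K : Type) [Field K] {ι : Type}
    (Y : Set (Projectivization K (ι → K))) (d : ℕ) : ℕ :=
  sInf {n | ∃ F : MvPolynomial ι K, F.IsHomogeneous d ∧
    (∃ p ∈ Y, eval p.rep F ≠ 0) ∧
    n = Set.ncard {p ∈ Y | eval p.rep F ≠ 0}}

/-!
Setting the first coordinate to `1` identifies the torus in `ℙⁿ` with the grid `(K*)ⁿ`, and forms of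
degree `d` with polynomials of degree at most `d`. The lower bound is the Alon–Füredi theorem: if
`f` does not vanish on all of `∏ᵢ Sᵢ`, it is nonzero at `∏ᵢ (#Sᵢ - zᵢ)` or more of its points, for
some `zᵢ < #Sᵢ` with `∑ᵢ zᵢ ≤ deg f`. To see this, induct on `n`. If `f` vanishes on a whole slice
`x₀ = a` of the grid, it agrees on the grid with `(x₀ - a) g` for some `g` of smaller degree, so
passing to `g` and `S₀ ∖ {a}` costs one unit of `z₀`; if no slice is like this, apply induction to
the slice with the fewest nonzeros and take `z₀ = 0`. For `#Sᵢ = q - 1` the product is smallest when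
the deficits `zᵢ` are chosen greedily, and products of linear forms `tᵢ - a t₀` attain that value.
-/

open Finset

section EvalHead

variable {R : Type*} [CommRing R] {n : ℕ}

/-- The polynomial `f(a, X₀, …, Xₙ₋₁)` obtained by specializing the first variable of `f` to `a`:
the restriction of `f` to the hyperplane `x₀ = a`, and for `a = 1` its dehomogenization. -/
noncomputable def evalHead (a : R) (f : MvPolynomial (Fin (n + 1)) R) : MvPolynomial (Fin n) R :=
  (finSuccEquiv R n f).eval (C a)

theorem eval_evalHead (a : R) (f : MvPolynomial (Fin (n + 1)) R) (x : Fin n → R) :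
    eval x (evalHead a f) = eval (Fin.cons a x : Fin (n + 1) → R) f := by
  rw [eval_eq_eval_mv_eval', evalHead, Polynomial.eval_map, ← Polynomial.eval₂_at_apply, eval_C]

theorem totalDegree_evalHead_le (a : R) (f : MvPolynomial (Fin (n + 1)) R) :
    (evalHead a f).totalDegree ≤ f.totalDegree := by
  rw [evalHead, Polynomial.eval_eq_sum]
  refine totalDegree_finsetSum_le fun i hi => ?_
  calc (((finSuccEquiv R n f).coeff i) * C a ^ i).totalDegree
      ≤ ((finSuccEquiv R n f).coeff i).totalDegree := by
        rw [← C_pow]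
        exact (totalDegree_mul _ _).trans (by rw [totalDegree_C, add_zero])
    _ ≤ f.totalDegree := (Nat.le_add_right _ i).trans
        (totalDegree_coeff_finSuccEquiv_add_le f i (Polynomial.mem_support_iff.1 hi))

theorem finSuccEquiv_C (a : R) : finSuccEquiv R n (C a) = Polynomial.C (C a) :=
  (finSuccEquiv R n).commutes a

theorem finSuccEquiv_rename_succ (f : MvPolynomial (Fin n) R) :
    finSuccEquiv R n (rename Fin.succ f) = Polynomial.C f := by
  induction f using MvPolynomial.induction_on with
  | C a => rw [rename_C, finSuccEquiv_C]
  | add p q hp hq => simp [hp, hq]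
  | mul_X p i hp => simp [hp, finSuccEquiv_X_succ]

theorem X_zero_sub_C_dvd_sub_rename_evalHead (a : R) (f : MvPolynomial (Fin (n + 1)) R) :
    X 0 - C a ∣ f - rename Fin.succ (evalHead a f) := by
  have hdvd : finSuccEquiv R n (X 0 - C a) ∣
      finSuccEquiv R n (f - rename Fin.succ (evalHead a f)) := by
    rw [map_sub, map_sub, finSuccEquiv_X_zero, finSuccEquiv_C, finSuccEquiv_rename_succ]
    exact Polynomial.X_sub_C_dvd_sub_C_eval
  exact (map_dvd_iff (finSuccEquiv R n)).1 hdvd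

end EvalHead

section AlonFuredi

variable {R : Type*} [CommRing R] {n : ℕ}

open Classical in
/-- The points of the grid `∏ᵢ S i` at which `f` does not vanish, i.e. the support of the word
that `f` defines in the evaluation code on the grid. -/
noncomputable def gridSupport (S : Fin n → Finset R) (f : MvPolynomial (Fin n) R) :
    Finset (Fin n → R) :=
  {x ∈ Fintype.piFinset S | eval x f ≠ 0}

theorem mem_gridSupport {S : Fin n → Finset R} {f : MvPolynomial (Fin n) R} {x : Fin n → R} :
    x ∈ gridSupport S f ↔ (∀ i, x i ∈ S i) ∧ eval x f ≠ 0 := by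
  simp only [gridSupport, mem_filter, Fintype.mem_piFinset]

theorem cons_mem_gridSupport_cons {T : Finset R} {S : Fin n → Finset R}
    {f : MvPolynomial (Fin (n + 1)) R} {a : R} {x : Fin n → R} :
    (Fin.cons a x : Fin (n + 1) → R) ∈ gridSupport (Fin.cons T S) f ↔
      a ∈ T ∧ x ∈ gridSupport S (evalHead a f) := by
  simp [mem_gridSupport, eval_evalHead, Fin.forall_fin_succ, and_assoc]

theorem card_gridSupport_cons (T : Finset R) (S : Fin n → Finset R)
    (f : MvPolynomial (Fin (n + 1)) R) :
    #(gridSupport (Fin.cons T S) f) = ∑ a ∈ T, #(gridSupport S (evalHead a f)) := by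
  rw [← card_sigma]
  refine card_nbij' (fun x => ⟨x 0, Fin.tail x⟩) (fun p => Fin.cons p.1 p.2) ?_ ?_ ?_ ?_
  · intro x hx
    rw [← Fin.cons_self_tail x] at hx
    exact mem_sigma.2 (cons_mem_gridSupport_cons.1 hx)
  · exact fun p hp => cons_mem_gridSupport_cons.2 (mem_sigma.1 hp)
  · exact fun x _ => Fin.cons_self_tail x
  · exact fun p _ => rfl

/-- The conclusion of the Alon–Füredi theorem for `f` on the grid `∏ᵢ S i`, stated in terms of
the deficits `z i = #(S i) - y i` of its factors `y i`. -/
def AlonFurediBound (S : Fin n → Finset R) (f : MvPolynomial (Fin n) R) : Prop :=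
  ∃ z : Fin n → ℕ, (∀ i, z i < #(S i)) ∧ ∑ i, z i ≤ f.totalDegree ∧
    ∏ i, (#(S i) - z i) ≤ #(gridSupport S f)

theorem AlonFurediBound.cons_of_evalHead {T : Finset R} {S : Fin n → Finset R}
    {f : MvPolynomial (Fin (n + 1)) R} (hT : T.Nonempty)
    (h : ∀ a ∈ T, AlonFurediBound S (evalHead a f)) : AlonFurediBound (Fin.cons T S) f := by
  obtain ⟨a, haT, hmin⟩ := exists_min_image T (fun a => #(gridSupport S (evalHead a f))) hT
  obtain ⟨z, hzlt, hzsum, hzprod⟩ := h a haT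
  refine ⟨Fin.cons 0 z, ?_, ?_, ?_⟩
  · simpa [Fin.forall_fin_succ] using ⟨hT, hzlt⟩
  · simpa [Fin.sum_univ_succ] using hzsum.trans (totalDegree_evalHead_le a f)
  · calc ∏ i, (#((Fin.cons T S : Fin (n + 1) → Finset R) i) - (Fin.cons 0 z : Fin (n + 1) → ℕ) i)
        = #T * ∏ i, (#(S i) - z i) := by simp [Fin.prod_univ_succ]
      _ ≤ #T * #(gridSupport S (evalHead a f)) := Nat.mul_le_mul_left _ hzprod
      _ ≤ ∑ b ∈ T, #(gridSupport S (evalHead b f)) := by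
        simpa using card_nsmul_le_sum T _ _ hmin
      _ = #(gridSupport (Fin.cons T S) f) := (card_gridSupport_cons T S f).symm

theorem AlonFurediBound.cons_of_erase [DecidableEq R] {T : Finset R} {S : Fin n → Finset R}
    {f g : MvPolynomial (Fin (n + 1)) R} {a : R} (haT : a ∈ T)
    (hdeg : g.totalDegree + 1 ≤ f.totalDegree)
    (hsupp : gridSupport (Fin.cons T S) f = gridSupport (Fin.cons (T.erase a) S) g)
    (hg : AlonFurediBound (Fin.cons (T.erase a) S) g) : AlonFurediBound (Fin.cons T S) f := by
  obtain ⟨z, hzlt, hzsum, hzprod⟩ := hg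
  have hcard : #(T.erase a) + 1 = #T := card_erase_add_one haT
  rw [Fin.forall_fin_succ] at hzlt
  rw [Fin.sum_univ_succ] at hzsum
  simp only [Fin.prod_univ_succ, Fin.cons_zero, Fin.cons_succ] at hzlt hzprod
  refine ⟨Fin.cons (z 0 + 1) (Fin.tail z), ?_, ?_, ?_⟩
  · simp only [Fin.forall_fin_succ, Fin.cons_zero, Fin.cons_succ]
    exact ⟨by omega, hzlt.2⟩
  · simp only [Fin.sum_univ_succ, Fin.cons_zero, Fin.cons_succ, Fin.tail]
    omega
  · simp only [Fin.prod_univ_succ, Fin.cons_zero, Fin.cons_succ, Fin.tail]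
    rwa [hsupp, ← hcard, Nat.add_sub_add_right]

variable [IsDomain R]

theorem exists_eval_eq_sub_mul_of_gridSupport_evalHead_eq_empty {T : Finset R}
    {S : Fin n → Finset R} {f : MvPolynomial (Fin (n + 1)) R} {a : R}
    (hf : (gridSupport (Fin.cons T S) f).Nonempty) (ha : gridSupport S (evalHead a f) = ∅) :
    ∃ g : MvPolynomial (Fin (n + 1)) R, g.totalDegree + 1 ≤ f.totalDegree ∧
      ∀ x : Fin (n + 1) → R, (∀ i : Fin n, x i.succ ∈ S i) →
        eval x f = (x 0 - a) * eval x g := by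
  obtain ⟨g, hg⟩ := X_zero_sub_C_dvd_sub_rename_evalHead a f
  have heval : ∀ x : Fin (n + 1) → R, (∀ i : Fin n, x i.succ ∈ S i) →
      eval x f = (x 0 - a) * eval x g := by
    intro x hx
    have hvanish : eval (x ∘ Fin.succ) (evalHead a f) = 0 := by
      by_contra hne
      simpa [ha] using mem_gridSupport.2 ⟨hx, hne⟩
    simpa [eval_rename, hvanish] using congrArg (eval x) hg
  refine ⟨g, ?_, heval⟩
  have hg0 : g ≠ 0 := by
    rintro rfl
    obtain ⟨x, hx⟩ := hf
    rw [mem_gridSupport, Fin.forall_fin_succ] at hx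
    exact hx.2 (by simpa using heval x hx.1.2)
  have hlin : (X 0 - C a : MvPolynomial (Fin (n + 1)) R).totalDegree = 1 := by
    rw [sub_eq_add_neg, ← C_neg, totalDegree_add_eq_left_of_totalDegree_lt (by simp), totalDegree_X]
  calc g.totalDegree + 1 = ((X 0 - C a) * g).totalDegree := by
        rw [totalDegree_mul_of_isDomain (by rintro h; simp [h] at hlin) hg0, hlin, add_comm]
    _ = (f - rename Fin.succ (evalHead a f)).totalDegree := by rw [hg]
    _ ≤ f.totalDegree := (totalDegree_sub _ _).trans
        (max_le le_rfl ((totalDegree_rename_le _ _).trans (totalDegree_evalHead_le a f)))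

theorem gridSupport_cons_eq_gridSupport_cons_erase [DecidableEq R] {T : Finset R}
    {S : Fin n → Finset R} {f g : MvPolynomial (Fin (n + 1)) R} {a : R}
    (heval : ∀ x : Fin (n + 1) → R, (∀ i : Fin n, x i.succ ∈ S i) →
      eval x f = (x 0 - a) * eval x g) :
    gridSupport (Fin.cons T S) f = gridSupport (Fin.cons (T.erase a) S) g := by
  ext x
  simp only [mem_gridSupport, Fin.forall_fin_succ, Fin.cons_zero, Fin.cons_succ, mem_erase]
  by_cases hx : ∀ i : Fin n, x i.succ ∈ S i
  · rw [heval x hx, mul_ne_zero_iff, sub_ne_zero]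
    tauto
  · tauto

theorem AlonFurediBound.cons {S : Fin n → Finset R}
    (hS : ∀ f, (gridSupport S f).Nonempty → AlonFurediBound S f) (T : Finset R)
    (f : MvPolynomial (Fin (n + 1)) R) (hf : (gridSupport (Fin.cons T S) f).Nonempty) :
    AlonFurediBound (Fin.cons T S) f := by
  classical
  induction T using Finset.strongInduction generalizing f with
  | H T ih =>
    by_cases hfiber : ∃ a ∈ T, gridSupport S (evalHead a f) = ∅
    · obtain ⟨a, haT, ha⟩ := hfiber
      obtain ⟨g, hdeg, heval⟩ := exists_eval_eq_sub_mul_of_gridSupport_evalHead_eq_empty hf ha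
      have hsupp := gridSupport_cons_eq_gridSupport_cons_erase (T := T) heval
      exact .cons_of_erase haT hdeg hsupp (ih _ (erase_ssubset haT) g (hsupp ▸ hf))
    · push Not at hfiber
      obtain ⟨x, hx⟩ := hf
      have hT : T.Nonempty := ⟨x 0, by simpa using (mem_gridSupport.1 hx).1 0⟩
      exact .cons_of_evalHead hT fun a ha => hS _ (hfiber a ha)

theorem alon_furedi (S : Fin n → Finset R) (f : MvPolynomial (Fin n) R)
    (hf : (gridSupport S f).Nonempty) : AlonFurediBound S f := by
  induction n with
  | zero => exact ⟨0, by simp, by simp, by simpa using hf.card_pos⟩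
  | succ n ih =>
    rw [← Fin.cons_self_tail S] at hf ⊢
    exact .cons (ih (Fin.tail S)) (S 0) f hf

end AlonFuredi

section GreedyProd

/-- The `i`-th entry of the sequence `m - 1, …, m - 1, r, 0, 0, …` of sum `d`, with `r < m - 1`
(for `1 < m`); both subtractions are meant to be truncated. -/
def greedyDeficit (m d i : ℕ) : ℕ :=
  min (m - 1) (d - i * (m - 1))

/-- The minimum of `∏ᵢ (m - z i)` over all `z : Fin n → ℕ` with `z i < m` and `∑ᵢ z i ≤ d`, for
`0 < m`, given by its value at the greedy choice of `z`. -/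
def greedyProd (m n d : ℕ) : ℕ :=
  ∏ i : Fin n, (m - greedyDeficit m d i)

variable {m n d : ℕ}

theorem greedyDeficit_zero (m d : ℕ) : greedyDeficit m d 0 = min (m - 1) d := by
  simp [greedyDeficit]

theorem greedyDeficit_succ (m d i : ℕ) :
    greedyDeficit m d (i + 1) = greedyDeficit m (d - (m - 1)) i := by
  rw [greedyDeficit, greedyDeficit, add_one_mul, Nat.sub_sub, add_comm]

theorem sum_greedyDeficit_le (m n d : ℕ) : ∑ i : Fin n, greedyDeficit m d i ≤ d := by
  induction n generalizing d with
  | zero => simp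
  | succ n ih =>
    have htail := ih (d - (m - 1))
    simp only [Fin.sum_univ_succ, Fin.val_zero, Fin.val_succ, greedyDeficit_zero,
      greedyDeficit_succ]
    omega

theorem greedyDeficit_lt (hm : 0 < m) (d i : ℕ) : greedyDeficit m d i < m :=
  (min_le_left _ _).trans_lt (Nat.sub_one_lt hm.ne')

theorem greedyProd_pos (hm : 0 < m) (n d : ℕ) : 0 < greedyProd m n d :=
  prod_pos fun i _ => Nat.sub_pos_of_lt (greedyDeficit_lt hm d i)

theorem greedyProd_zero_right (m n : ℕ) : greedyProd m n 0 = m ^ n := by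
  simp [greedyProd, greedyDeficit]

theorem greedyProd_succ (m n d : ℕ) :
    greedyProd m (n + 1) d = (m - min (m - 1) d) * greedyProd m n (d - (m - 1)) := by
  simp only [greedyProd, Fin.prod_univ_succ, Fin.val_zero, Fin.val_succ, greedyDeficit_zero,
    greedyDeficit_succ]

theorem greedyProd_succ_of_le_sub_one (hd : d ≤ m - 1) (n : ℕ) :
    greedyProd m (n + 1) d = (m - d) * m ^ n := by
  rw [greedyProd_succ, min_eq_right hd, Nat.sub_eq_zero_of_le hd, greedyProd_zero_right]

theorem greedyProd_succ_of_sub_one_le (hm : 0 < m) (hd : m - 1 ≤ d) (n : ℕ) :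
    greedyProd m (n + 1) d = greedyProd m n (d - (m - 1)) := by
  rw [greedyProd_succ, min_eq_left hd, Nat.sub_sub_self (show 1 ≤ m from hm), one_mul]

theorem greedyProd_eq_one (hm : 0 < m) (hd : n * (m - 1) ≤ d) : greedyProd m n d = 1 := by
  induction n generalizing d with
  | zero => simp [greedyProd]
  | succ n ih =>
    rw [add_one_mul] at hd
    rw [greedyProd_succ_of_sub_one_le hm (by omega), ih (by omega)]

-- Concentrating the total deficit `z + w` on one factor does not increase the product.
theorem sub_min_mul_sub_le_mul {z w : ℕ} (hz : z < m) (hw : w < m) :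
    (m - min (m - 1) (z + w)) * (m - (z + w - (m - 1))) ≤ (m - z) * (m - w) := by
  obtain ⟨a, rfl⟩ := Nat.exists_eq_add_of_lt hz
  rcases Nat.lt_or_ge (z + w) (z + a + 1) with hlt | hge
  · obtain ⟨b, rfl⟩ : ∃ b, a = w + b := Nat.exists_eq_add_of_le (by omega)
    rw [show z + (w + b) + 1 - min (z + (w + b) + 1 - 1) (z + w) = b + 1 by omega,
      show z + (w + b) + 1 - (z + w - (z + (w + b) + 1 - 1)) = z + (w + b) + 1 by omega,
      show z + (w + b) + 1 - z = w + b + 1 by omega,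
      show z + (w + b) + 1 - w = z + b + 1 by omega]
    nlinarith [Nat.zero_le (z * w)]
  · obtain ⟨b, hb⟩ := Nat.exists_eq_add_of_lt hw
    rw [show z + a + 1 - min (z + a + 1 - 1) (z + w) = 1 by omega,
      show z + a + 1 - (z + w - (z + a + 1 - 1)) = a + b + 1 by omega,
      show z + a + 1 - z = a + 1 by omega, show z + a + 1 - w = b + 1 by omega]
    nlinarith [Nat.zero_le (a * b)]

theorem greedyProd_succ_le_mul {z : ℕ} (hzm : z < m) (hzd : z ≤ d) :
    greedyProd m (n + 1) d ≤ (m - z) * greedyProd m n (d - z) := by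
  induction n generalizing d with
  | zero =>
    rw [greedyProd_succ]
    simp only [greedyProd, univ_eq_empty, prod_empty, mul_one]
    omega
  | succ n ih =>
    rcases Nat.lt_or_ge (d - z) m with hlt | hge
    · obtain ⟨w, rfl⟩ := Nat.exists_eq_add_of_le hzd
      rw [Nat.add_sub_cancel_left] at hlt ⊢
      have hrest : z + w - (m - 1) ≤ m - 1 := by omega
      have hw : w ≤ m - 1 := by omega
      simp only [greedyProd_succ, min_eq_right hrest, min_eq_right hw,
        Nat.sub_eq_zero_of_le hrest, Nat.sub_eq_zero_of_le hw, ← mul_assoc]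
      exact Nat.mul_le_mul_right _ (sub_min_mul_sub_le_mul hzm hlt)
    · calc greedyProd m (n + 1 + 1) d = greedyProd m (n + 1) (d - (m - 1)) :=
            greedyProd_succ_of_sub_one_le (by omega) (by omega) _
        _ ≤ (m - z) * greedyProd m n (d - (m - 1) - z) := ih (by omega)
        _ = (m - z) * greedyProd m (n + 1) (d - z) := by
            rw [greedyProd_succ_of_sub_one_le (by omega) (by omega), Nat.sub_right_comm]

theorem greedyProd_le_prod {z : Fin n → ℕ} (hz : ∀ i, z i < m) (hsum : ∑ i, z i ≤ d) :
    greedyProd m n d ≤ ∏ i, (m - z i) := by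
  induction n generalizing d with
  | zero => simp [greedyProd]
  | succ n ih =>
    rw [Fin.sum_univ_succ] at hsum
    rw [Fin.prod_univ_succ]
    calc greedyProd m (n + 1) d ≤ (m - z 0) * greedyProd m n (d - z 0) :=
          greedyProd_succ_le_mul (hz 0) (by omega)
      _ ≤ (m - z 0) * ∏ i : Fin n, (m - z i.succ) :=
          Nat.mul_le_mul_left _ (ih (fun i => hz i.succ) (by omega))

end GreedyProd

section LinearFormProd

variable {R : Type*} [CommRing R] {n : ℕ}

/-- The product of the linear forms `tᵢ₊₁ - a t₀` over all `i` and all `a ∈ A i`, padded by a power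
of `t₀`, which is nowhere zero on the torus, to reach any larger degree. -/
noncomputable def linearFormProd (A : Fin n → Finset R) (k : ℕ) : MvPolynomial (Fin (n + 1)) R :=
  X 0 ^ k * ∏ i, ∏ a ∈ A i, (X i.succ - C a * X 0)

theorem isHomogeneous_linearFormProd (A : Fin n → Finset R) (k : ℕ) :
    (linearFormProd A k).IsHomogeneous (k + ∑ i, #(A i)) := by
  refine (isHomogeneous_X_pow 0 k).mul (IsHomogeneous.prod _ _ _ fun i _ => ?_)
  simpa using IsHomogeneous.prod (A i) _ (fun _ => 1) fun a _ =>
    (isHomogeneous_X R i.succ).sub (isHomogeneous_C_mul_X a 0)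

theorem gridSupport_evalHead_one_linearFormProd [IsDomain R] [DecidableEq R]
    (S A : Fin n → Finset R) (k : ℕ) :
    gridSupport S (evalHead 1 (linearFormProd A k)) = Fintype.piFinset fun i => S i \ A i := by
  ext x
  have heval : eval x (evalHead 1 (linearFormProd A k)) = ∏ i, ∏ a ∈ A i, (x i - a) := by
    simp [eval_evalHead, linearFormProd]
  have hne : ∏ i, ∏ a ∈ A i, (x i - a) ≠ 0 ↔ ∀ i, x i ∉ A i := by
    simp only [prod_ne_zero_iff, mem_univ, true_imp_iff, sub_ne_zero]
    exact forall_congr' fun i => forall_mem_not_eq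
  simp only [mem_gridSupport, heval, hne, Fintype.mem_piFinset, mem_sdiff, forall_and]

end LinearFormProd

section ProjectiveTorus

variable {K : Type} [Field K] {n d : ℕ}

theorem eval_smul_of_isHomogeneous {R σ : Type*} [CommSemiring R] {F : MvPolynomial σ R}
    (hF : F.IsHomogeneous d) (a : R) (x : σ → R) : eval (a • x) F = a ^ d * eval x F := by
  rw [eval_eq, eval_eq, mul_sum]
  refine sum_congr rfl fun s hs => ?_
  simp only [Pi.smul_apply, smul_eq_mul, mul_pow, prod_mul_distrib, prod_pow_eq_pow_sum]
  rw [← hF.degree_eq_sum_deg_support hs, mul_left_comm]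

theorem eval_rep_mk_ne_zero_iff {ι : Type} {F : MvPolynomial ι K} (hF : F.IsHomogeneous d)
    {v : ι → K} (hv : v ≠ 0) :
    eval (Projectivization.mk K v hv).rep F ≠ 0 ↔ eval v F ≠ 0 := by
  obtain ⟨a, ha⟩ := Projectivization.exists_smul_eq_mk_rep K v hv
  rw [← ha, Units.smul_def, eval_smul_of_isHomogeneous hF]
  simp

theorem mk_mem_projTorus_iff {s : ℕ} {v : Fin s → K} (hv : v ≠ 0) :
    Projectivization.mk K v hv ∈ projTorus K s ↔ ∀ i, v i ≠ 0 :=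
  forall_congr' fun i => by simpa using eval_rep_mk_ne_zero_iff (isHomogeneous_X K i) hv

/-- The standard affine chart `x ↦ [1 : x₀ : … : xₙ₋₁]` of `ℙⁿ`. -/
def affineChart (x : Fin n → K) : Projectivization K (Fin (n + 1) → K) :=
  Projectivization.mk K (Fin.cons 1 x) fun h => one_ne_zero (congrFun h 0)

theorem affineChart_injective : Function.Injective (affineChart (K := K) (n := n)) := by
  intro x y hxy
  obtain ⟨a, ha⟩ := (Projectivization.mk_eq_mk_iff' K _ _ _ _).1 hxy
  have ha1 : a = 1 := by simpa using congrFun ha 0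
  rw [ha1, one_smul] at ha
  exact ((Fin.cons_injective2 ha).2).symm

theorem affineChart_mem_projTorus_iff {x : Fin n → K} :
    affineChart x ∈ projTorus K (n + 1) ↔ ∀ i, x i ≠ 0 := by
  simp [affineChart, mk_mem_projTorus_iff, Fin.forall_fin_succ]

theorem exists_affineChart_eq_of_mem_projTorus {p : Projectivization K (Fin (n + 1) → K)}
    (hp : p ∈ projTorus K (n + 1)) : ∃ x, affineChart x = p := by
  refine ⟨fun i => p.rep i.succ / p.rep 0, ?_⟩
  rw [← p.mk_rep]
  refine (Projectivization.mk_eq_mk_iff' K _ _ _ _).2 ⟨(p.rep 0)⁻¹, ?_⟩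
  ext i
  cases i using Fin.cases with
  | zero => simpa using inv_mul_cancel₀ (hp 0)
  | succ i => simp [div_eq_inv_mul]

theorem eval_rep_affineChart_ne_zero_iff {F : MvPolynomial (Fin (n + 1)) K}
    (hF : F.IsHomogeneous d) (x : Fin n → K) :
    eval (affineChart x).rep F ≠ 0 ↔ eval x (evalHead 1 F) ≠ 0 := by
  rw [affineChart, eval_rep_mk_ne_zero_iff hF, eval_evalHead]

variable [Fintype K]

theorem setOf_projTorus_eval_ne_zero_eq_image [DecidableEq K]
    {F : MvPolynomial (Fin (n + 1)) K} (hF : F.IsHomogeneous d) :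
    {p ∈ projTorus K (n + 1) | eval p.rep F ≠ 0} =
      affineChart '' (gridSupport (fun _ => {0}ᶜ) (evalHead 1 F) : Set (Fin n → K)) := by
  ext p
  constructor
  · rintro ⟨hp, hpF⟩
    obtain ⟨x, rfl⟩ := exists_affineChart_eq_of_mem_projTorus hp
    rw [affineChart_mem_projTorus_iff] at hp
    rw [eval_rep_affineChart_ne_zero_iff hF] at hpF
    exact ⟨x, mem_gridSupport.2 ⟨by simpa using hp, hpF⟩, rfl⟩
  · rintro ⟨x, hx, rfl⟩
    rw [mem_coe, mem_gridSupport] at hx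
    exact ⟨affineChart_mem_projTorus_iff.2 (by simpa using hx.1),
      (eval_rep_affineChart_ne_zero_iff hF x).2 hx.2⟩

theorem ncard_projTorus_eval_ne_zero [DecidableEq K] {F : MvPolynomial (Fin (n + 1)) K}
    (hF : F.IsHomogeneous d) :
    Set.ncard {p ∈ projTorus K (n + 1) | eval p.rep F ≠ 0} =
      #(gridSupport (fun _ : Fin n => ({0}ᶜ : Finset K)) (evalHead 1 F)) := by
  rw [setOf_projTorus_eval_ne_zero_eq_image hF,
    Set.ncard_image_of_injective _ affineChart_injective, Set.ncard_coe_finset]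

theorem greedyProd_le_ncard_projTorus {F : MvPolynomial (Fin (n + 1)) K}
    (hF : F.IsHomogeneous d) (hne : ∃ p ∈ projTorus K (n + 1), eval p.rep F ≠ 0) :
    greedyProd (Fintype.card K - 1) n d ≤
      Set.ncard {p ∈ projTorus K (n + 1) | eval p.rep F ≠ 0} := by
  classical
  have hsupp : (gridSupport (fun _ : Fin n => ({0}ᶜ : Finset K)) (evalHead 1 F)).Nonempty := by
    obtain ⟨p, hp⟩ := hne
    have hp' : p ∈ {p ∈ projTorus K (n + 1) | eval p.rep F ≠ 0} := hp
    rw [setOf_projTorus_eval_ne_zero_eq_image hF] at hp'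
    obtain ⟨x, hx, -⟩ := hp'
    exact ⟨x, hx⟩
  obtain ⟨z, hzlt, hzsum, hzprod⟩ := alon_furedi _ _ hsupp
  have hdeg : (evalHead 1 F).totalDegree ≤ d :=
    (totalDegree_evalHead_le 1 F).trans hF.totalDegree_le
  simp only [card_compl, card_singleton] at hzlt hzprod
  rw [ncard_projTorus_eval_ne_zero hF]
  exact (greedyProd_le_prod hzlt (hzsum.trans hdeg)).trans hzprod

theorem exists_ncard_projTorus_eq_greedyProd (K : Type) [Field K] [Fintype K] (n d : ℕ) :
    ∃ F : MvPolynomial (Fin (n + 1)) K, F.IsHomogeneous d ∧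
      Set.ncard {p ∈ projTorus K (n + 1) | eval p.rep F ≠ 0} =
        greedyProd (Fintype.card K - 1) n d := by
  classical
  set m := Fintype.card K - 1
  have hm0 : 0 < m := Nat.sub_pos_of_lt Fintype.one_lt_card
  have hcard : #({0}ᶜ : Finset K) = m := by rw [card_compl, card_singleton]
  have hchoose (i : Fin n) : ∃ A ⊆ ({0}ᶜ : Finset K), #A = greedyDeficit m d i :=
    exists_subset_card_eq (hcard ▸ (greedyDeficit_lt hm0 d i).le)
  choose A hAsub hAcard using hchoose
  have hF : (linearFormProd A (d - ∑ i, #(A i))).IsHomogeneous d := by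
    have hsum : ∑ i, #(A i) ≤ d := by simpa only [hAcard] using sum_greedyDeficit_le m n d
    simpa only [Nat.sub_add_cancel hsum] using isHomogeneous_linearFormProd A (d - ∑ i, #(A i))
  refine ⟨_, hF, ?_⟩
  rw [ncard_projTorus_eval_ne_zero hF, gridSupport_evalHead_one_linearFormProd,
    Fintype.card_piFinset, greedyProd]
  simp only [card_sdiff_of_subset (hAsub _), hcard, hAcard]

end ProjectiveTorus

theorem stmt_11_general (K : Type) [Field K] [Fintype K] (n d : ℕ) :
    minDist K (projTorus K (n + 1)) d = greedyProd (Fintype.card K - 1) n d := by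
  refine IsLeast.csInf_eq ⟨?_, ?_⟩
  · obtain ⟨F, hF, hcard⟩ := exists_ncard_projTorus_eq_greedyProd K n d
    have hpos := greedyProd_pos (Nat.sub_pos_of_lt (Fintype.one_lt_card (α := K))) n d
    exact ⟨F, hF, Set.nonempty_of_ncard_ne_zero (hcard ▸ hpos.ne'), hcard.symm⟩
  · rintro _ ⟨F, hF, hne, rfl⟩
    exact greedyProd_le_ncard_projTorus hF hne

/-- For the projective torus `T ⊆ ℙ^2` over a finite field with `q ≥ 3` elements, the
minimum distance of `C_T(d)` is `(q-1)^2 - d(q-1)` for `1 ≤ d ≤ q-2`, `2q-d-3` for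
`q-1 ≤ d ≤ 2q-5`, and `1` for `d ≥ 2q-4`. -/
theorem stmt_11 (K : Type) [Field K] [Fintype K] (q d : ℕ)
    (hK : Fintype.card K = q) (hq : 3 ≤ q) (hd : 1 ≤ d) :
    (d ≤ q - 2 → minDist K (projTorus K 3) d = (q - 1) ^ 2 - d * (q - 1)) ∧
    (q - 1 ≤ d → d ≤ 2 * q - 5 → minDist K (projTorus K 3) d = 2 * q - d - 3) ∧
    (2 * q - 4 ≤ d → minDist K (projTorus K 3) d = 1) := by
  subst hK
  simp only [stmt_11_general K 2 d]
  set m := Fintype.card K - 1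
  refine ⟨fun h => ?_, fun h h' => ?_, fun h => greedyProd_eq_one (by omega) (by omega)⟩
  · rw [greedyProd_succ_of_le_sub_one (by omega), pow_one, Nat.sub_mul, sq]
  · rw [greedyProd_succ_of_sub_one_le (by omega) (by omega),
      greedyProd_succ_of_le_sub_one (by omega), pow_zero, mul_one]
    omega
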